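/- arXiv:1405.0781 — 5 statements merged into one kernel-verified Lean document; each statement's English description precedes it below -/
import Mathlib

section
/- The open set condition fails for {S_i}_{i=1}^m if and only if there exists a vertex v ∈ Λ and a finite directed path in the graph G starting at v and ending at the vertex (0,0) (i.e., Relation.ReflTransGen applied to the edge relation of G relates v to (0,0)). -/
open Polynomial Filter

noncomputable section

namespace PVOSC

variable {m : ℕ}

/-- `λ⁻¹` is a Pisot (P.V.) number: an algebraic integer `> 1` all of whose
Galois conjugates other than itself have complex absolute value `< 1`. -/
def IsPisot (θ : ℝ) : Prop :=
  1 < θ ∧ IsIntegral ℤ θ ∧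
    ∀ z : ℂ, aeval z (minpoly ℤ θ) = 0 → z ≠ (θ : ℂ) → ‖z‖ < 1

/-- `p_σ` for a finite word `σ`. -/
def wordP (p : Fin m → ℕ) (σ : List (Fin m)) : ℕ := (σ.map p).sum

/-- The contracting similitude `S_i(x) = λ^{p_i} x + b_i`. -/
def Smap (lam : ℝ) (p : Fin m → ℕ) (b : Fin m → ℝ) (i : Fin m) : ℝ → ℝ :=
  fun x => lam ^ p i * x + b i

/-- `S_σ = S_{i₁} ∘ ⋯ ∘ S_{i_k}` for `σ = i₁ ⋯ i_k`. -/
def SW (lam : ℝ) (p : Fin m → ℕ) (b : Fin m → ℝ) (σ : List (Fin m)) : ℝ → ℝ :=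
  σ.foldr (fun i f => Smap lam p b i ∘ f) id

/-- `b_σ`, the translation part of `S_σ`. -/
def wordB (lam : ℝ) (p : Fin m → ℕ) (b : Fin m → ℝ) (σ : List (Fin m)) : ℝ :=
  SW lam p b σ 0

/-- `B = {0, b₁, …, b_m}`. -/
def Bset (b : Fin m → ℝ) : Set ℝ := insert 0 (Set.range b)

/-- `B − B`. -/
def BB (b : Fin m → ℝ) : Set ℝ := {x | ∃ u ∈ Bset b, ∃ v ∈ Bset b, x = u - v}

/-- `max_i |b_i|`. -/
def bmax (b : Fin m → ℝ) : ℝ := ⨆ i, |b i|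

/-- The set `𝒞`. -/
def Cset (lam : ℝ) (b : Fin m → ℝ) (T : ℕ) : Set ℝ :=
  {x | |x| ≤ (1 + lam ^ (1 - (T : ℤ))) * bmax b / (1 - lam) ∧
    ∃ R : ℝ[X], (∀ n, R.coeff n ∈ BB b) ∧ lam ^ (2 - (T : ℤ)) * x = R.eval lam⁻¹}

/-- The vertex set `Ξ = {n ∈ ℤ : |n| ≤ T−1} × 𝒞`. -/
def Xi (lam : ℝ) (b : Fin m → ℝ) (T : ℕ) : Set (ℤ × ℝ) :=
  {v | |v.1| ≤ (T : ℤ) - 1 ∧ v.2 ∈ Cset lam b T}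

/-- The open set condition. -/
def OSC (lam : ℝ) (p : Fin m → ℕ) (b : Fin m → ℝ) : Prop :=
  ∃ U : Set ℝ, U.Nonempty ∧ IsOpen U ∧ (⋃ i, Smap lam p b i '' U) ⊆ U ∧
    ∀ i j : Fin m, i ≠ j → Smap lam p b i '' U ∩ Smap lam p b j '' U = ∅

/-- The strong separation condition for the attractor `E`. -/
def SSC (lam : ℝ) (p : Fin m → ℕ) (b : Fin m → ℝ) (E : Set ℝ) : Prop :=
  ∀ i j : Fin m, i ≠ j → Smap lam p b i '' E ∩ Smap lam p b j '' E = ∅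

/-- Group law on `ℤ × ℝ`: `(p₁,c₁)·(p₂,c₂) = (p₁+p₂, λ^{p₁} c₂ + c₁)`. -/
def gmul (lam : ℝ) (u v : ℤ × ℝ) : ℤ × ℝ := (u.1 + v.1, lam ^ u.1 * v.2 + u.2)

/-- Inverse for the group law: `(p,c)⁻¹ = (−p, −λ^{−p} c)`. -/
def ginv (lam : ℝ) (u : ℤ × ℝ) : ℤ × ℝ := (-u.1, -(lam ^ (-u.1) * u.2))

/-- The group element `(p_σ, b_σ)` associated to a finite word `σ`. -/
def elem (lam : ℝ) (p : Fin m → ℕ) (b : Fin m → ℝ) (σ : List (Fin m)) : ℤ × ℝ :=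
  ((wordP p σ : ℤ), wordB lam p b σ)

/-- The sequence `(q_k, c_k)` with the recursive structure w.r.t. `({α_k}, {β_k})`:
`recSeq … k = (q_{k+1}, c_{k+1})`, i.e. index `k` corresponds to `(q_{k+1}, c_{k+1})`. -/
def recSeq (lam : ℝ) (p : Fin m → ℕ) (b : Fin m → ℝ) (α β : ℕ → List (Fin m)) : ℕ → ℤ × ℝ
  | 0 => gmul lam (ginv lam (elem lam p b (β 0))) (elem lam p b (α 0))
  | (k+1) => gmul lam (ginv lam (elem lam p b (β (k+1))))
      (gmul lam (recSeq lam p b α β k) (elem lam p b (α (k+1))))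

/-- The edge relation of the directed graph `G` on `Ξ`. -/
def edge (lam : ℝ) (p : Fin m → ℕ) (b : Fin m → ℝ) (T : ℕ) (u v : ℤ × ℝ) : Prop :=
  u ∈ Xi lam b T ∧ v ∈ Xi lam b T ∧
    ∃ α β : List (Fin m), 1 ≤ wordP p α ∧ wordP p α ≤ 2 * T - 1 ∧
      1 ≤ wordP p β ∧ wordP p β ≤ 2 * T - 1 ∧
      v.1 = (wordP p α : ℤ) + u.1 - (wordP p β : ℤ) ∧
      v.2 = lam ^ (-(wordP p β : ℤ)) * u.2 + lam ^ (u.1 - (wordP p β : ℤ)) * wordB lam p b α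
        - lam ^ (-(wordP p β : ℤ)) * wordB lam p b β

/-- `Λ = Ξ ∩ {(p_j − p_i, λ^{−p_i}(b_j − b_i)) : i ≠ j}`. -/
def Lam (lam : ℝ) (p : Fin m → ℕ) (b : Fin m → ℝ) (T : ℕ) : Set (ℤ × ℝ) :=
  Xi lam b T ∩ {v | ∃ i j : Fin m, i ≠ j ∧
    v = ((p j : ℤ) - (p i : ℤ), lam ^ (-(p i : ℤ)) * (b j - b i))}

/-- The length-`k` prefix of an infinite word `ω`. -/
def prefixList (ω : ℕ → Fin m) (k : ℕ) : List (Fin m) := (List.range k).map ω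

theorem garsia (θ : ℝ) (h : IsPisot θ) (M D : ℝ) :
    {x : ℝ | |x| ≤ M ∧ ∃ R : ℤ[X], (∀ n, |(R.coeff n : ℝ)| ≤ D) ∧ x = aeval θ R}.Finite := by
  obtain ⟨h1, hInt, hconj⟩ := h
  have hIntQ : IsIntegral ℚ θ := hInt.tower_top
  have : FiniteDimensional ℚ (IntermediateField.adjoin ℚ {θ}) :=
    IntermediateField.adjoin.finiteDimensional hIntQ
  let K := IntermediateField.adjoin ℚ {θ}
  have : NumberField K := { to_charZero := inferInstance, to_finiteDimensional := this }
  let g : K := IntermediateField.AdjoinSimple.gen ℚ θ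
  have hg : algebraMap K ℝ g = θ := IntermediateField.AdjoinSimple.algebraMap_gen ℚ θ
  have hinj : Function.Injective (algebraMap K ℝ) := (algebraMap K ℝ).injective
  have key : ∀ R : ℤ[X], algebraMap K ℝ (aeval g R) = aeval θ R := by
    intro R
    rw [← hg, Polynomial.aeval_algebraMap_apply]
  have hgint : IsIntegral ℤ g := by
    refine (isIntegral_algHom_iff ((algebraMap K ℝ).toIntAlgHom) hinj).1 ?_
    change IsIntegral ℤ (algebraMap K ℝ g)
    rw [hg]; exact hInt
  have hD : 0 ≤ D ∨ D < 0 := le_or_gt 0 D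
  rcases hD with hD | hD
  swap
  · convert Set.finite_empty
    ext x
    simp only [Set.mem_ofPred_eq, Set.mem_empty_iff_false, iff_false]
    rintro ⟨_, R, hR, _⟩
    exact absurd (hR 0) (not_le.2 (lt_of_lt_of_le hD (abs_nonneg _)))
  have hmonic := minpoly.monic hInt
  have hroots : {z : ℂ | aeval z (minpoly ℤ θ) = 0}.Finite := by
    have hne : (minpoly ℤ θ).map (algebraMap ℤ ℂ) ≠ 0 := (hmonic.map _).ne_zero
    refine (Polynomial.finite_setOfPred_isRoot hne).subset ?_
    intro z hz
    simp only [Set.mem_ofPred_eq] at hz ⊢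
    rw [Polynomial.IsRoot, Polynomial.eval_map_algebraMap]
    exact hz
  obtain ⟨C, hC⟩ := (hroots.image (fun z => D / (1 - ‖z‖))).bddAbove
  have hfin := NumberField.Embeddings.finite_of_norm_le K ℂ (max M C)
  refine (hfin.image (algebraMap K ℝ)).subset ?_
  rintro x ⟨hx, R, hR, rfl⟩
  refine ⟨aeval g R, ⟨?_, ?_⟩, key R⟩
  · have h2 := Polynomial.aeval_subalgebra_coe R (integralClosure ℤ K) ⟨g, hgint⟩
    have h3 := (aeval (⟨g, hgint⟩ : integralClosure ℤ K) R).2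
    rw [h2] at h3
    exact h3
  · intro φ
    have e1 : ∀ Q : ℤ[X], φ (aeval g Q) = aeval (φ g) Q := by
      intro Q
      exact (Polynomial.aeval_algHom_apply φ.toIntAlgHom g Q).symm
    have hz : aeval (φ g) (minpoly ℤ θ) = 0 := by
      rw [← e1]
      have : aeval g (minpoly ℤ θ) = 0 := by
        apply hinj
        rw [key, minpoly.aeval, map_zero]
      rw [this, map_zero]
    rw [e1]
    by_cases hzt : φ g = (θ : ℂ)
    · rw [hzt]
      have : aeval (θ : ℂ) R = ((aeval θ R : ℝ) : ℂ) :=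
        Polynomial.aeval_algebraMap_apply ℂ θ R
      rw [this, Complex.norm_real]
      exact le_max_of_le_left hx
    · have hlt := hconj _ hz hzt
      refine le_max_of_le_right (le_trans ?_ (hC ⟨φ g, hz, rfl⟩))
      have h0 := norm_nonneg (φ g)
      generalize φ g = z at *
      rw [Polynomial.aeval_eq_sum_range]
      calc ‖∑ i ∈ Finset.range (R.natDegree + 1), R.coeff i • z ^ i‖
          ≤ ∑ i ∈ Finset.range (R.natDegree + 1), D * ‖z‖ ^ i := by
            refine norm_sum_le_of_le _ fun i _ => ?_
            rw [zsmul_eq_mul, norm_mul, norm_pow, Complex.norm_intCast]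
            exact mul_le_mul_of_nonneg_right (hR i) (by positivity)
        _ = D * ∑ i ∈ Finset.range (R.natDegree + 1), ‖z‖ ^ i := by rw [Finset.mul_sum]
        _ ≤ D * (1 - ‖z‖)⁻¹ := by
            refine mul_le_mul_of_nonneg_left ?_ hD
            rw [← tsum_geometric_of_lt_one h0 hlt]
            exact (summable_geometric_of_lt_one h0 hlt).sum_le_tsum _ (fun i _ => by positivity)
        _ = D / (1 - ‖z‖) := by rw [div_eq_mul_inv]

theorem wordP_nil (p : Fin m → ℕ) : wordP p [] = 0 := rfl

theorem wordP_cons (p : Fin m → ℕ) (i : Fin m) (σ : List (Fin m)) :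
    wordP p (i :: σ) = p i + wordP p σ := by simp [wordP]

theorem wordP_append (p : Fin m → ℕ) (σ τ : List (Fin m)) :
    wordP p (σ ++ τ) = wordP p σ + wordP p τ := by simp [wordP]

theorem SW_eq (lam : ℝ) (p : Fin m → ℕ) (b : Fin m → ℝ) (σ : List (Fin m)) (x : ℝ) :
    SW lam p b σ x = lam ^ wordP p σ * x + wordB lam p b σ := by
  induction σ generalizing x with
  | nil => simp [SW, wordB, wordP]
  | cons i σ ih =>
    have h : ∀ y, SW lam p b (i :: σ) y = lam ^ p i * SW lam p b σ y + b i := fun y => rfl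
    rw [wordB, h, h, ih x, ih 0, wordP_cons, pow_add]
    ring

theorem wordB_nil (lam : ℝ) (p : Fin m → ℕ) (b : Fin m → ℝ) : wordB lam p b [] = 0 := rfl

theorem wordB_cons (lam : ℝ) (p : Fin m → ℕ) (b : Fin m → ℝ) (i : Fin m) (σ : List (Fin m)) :
    wordB lam p b (i :: σ) = lam ^ p i * wordB lam p b σ + b i := rfl

theorem wordB_append (lam : ℝ) (p : Fin m → ℕ) (b : Fin m → ℝ) (σ τ : List (Fin m)) :
    wordB lam p b (σ ++ τ) = lam ^ wordP p σ * wordB lam p b τ + wordB lam p b σ := by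
  induction σ with
  | nil => simp [wordB_nil, wordP_nil]
  | cons i σ ih =>
    rw [List.cons_append, wordB_cons, wordB_cons, ih, wordP_cons, pow_add]
    ring

/-- the element `S_B⁻¹ S_A`. -/
def rel (lam : ℝ) (p : Fin m → ℕ) (b : Fin m → ℝ) (A B : List (Fin m)) : ℤ × ℝ :=
  ((wordP p A : ℤ) - wordP p B, lam ^ (-(wordP p B : ℤ)) * (wordB lam p b A - wordB lam p b B))

theorem rel_append {lam : ℝ} (h0 : lam ≠ 0) (p : Fin m → ℕ) (b : Fin m → ℝ)
    (A B α β : List (Fin m)) :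
    (rel lam p b (A ++ α) (B ++ β)).1
        = (wordP p α : ℤ) + (rel lam p b A B).1 - (wordP p β : ℤ) ∧
    (rel lam p b (A ++ α) (B ++ β)).2
        = lam ^ (-(wordP p β : ℤ)) * (rel lam p b A B).2
          + lam ^ ((rel lam p b A B).1 - (wordP p β : ℤ)) * wordB lam p b α
          - lam ^ (-(wordP p β : ℤ)) * wordB lam p b β := by
  constructor
  · simp only [rel, wordP_append]; push_cast; ring
  · simp only [rel, wordP_append, wordB_append, Nat.cast_add, zpow_sub₀ h0, zpow_neg,
      zpow_add₀ h0, zpow_natCast, neg_add]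
    field_simp
    ring

theorem rel_eq_zero {lam : ℝ} (h0 : lam ≠ 0) (p : Fin m → ℕ) (b : Fin m → ℝ)
    (A B : List (Fin m)) :
    rel lam p b A B = (0, 0) ↔ wordP p A = wordP p B ∧ wordB lam p b A = wordB lam p b B := by
  simp only [rel, Prod.mk.injEq, mul_eq_zero, zpow_ne_zero _ h0, false_or, sub_eq_zero,
    Nat.cast_inj]

theorem split_word (p : Fin m → ℕ) (T : ℕ) (hT1 : 1 ≤ T) (hpT : ∀ i, p i ≤ T)
    (L : List (Fin m)) (q : ℕ) (hq : q ≤ wordP p L) :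
    ∃ J M, L = J ++ M ∧ q ≤ wordP p J ∧ wordP p J < q + T := by
  induction L generalizing q with
  | nil => exact ⟨[], [], rfl, hq, by simp [wordP_nil]; omega⟩
  | cons i L ih =>
    rcases Nat.eq_zero_or_pos q with rfl | hq0
    · exact ⟨[], i :: L, rfl, by simp, by simp [wordP_nil]; omega⟩
    · rw [wordP_cons] at hq
      obtain ⟨J, M, rfl, h1, h2⟩ := ih (q - p i) (by omega)
      by_cases hqi : q ≤ p i
      · refine ⟨[i], J ++ M, rfl, ?_, ?_⟩ <;> simp only [wordP_cons, wordP_nil] <;>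
          have := hpT i <;> omega
      · refine ⟨i :: J, M, rfl, ?_, ?_⟩ <;> rw [wordP_cons] <;> omega

theorem wordP_pos (p : Fin m → ℕ) (hp : ∀ i, 1 ≤ p i) {L : List (Fin m)} (h : L ≠ []) :
    1 ≤ wordP p L := by
  cases L with
  | nil => exact absurd rfl h
  | cons i L => rw [wordP_cons]; have := hp i; omega

theorem abs_le_bmax (b : Fin m → ℝ) (i : Fin m) : |b i| ≤ bmax b :=
  le_ciSup (f := fun i => |b i|) (Set.finite_range _).bddAbove i

theorem bmax_nonneg (b : Fin m → ℝ) : 0 ≤ bmax b := Real.iSup_nonneg fun i => abs_nonneg _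

theorem SW_bound {lam : ℝ} (h0 : 0 < lam) (h1 : lam < 1) (p : Fin m → ℕ) (hp : ∀ i, 1 ≤ p i)
    (b : Fin m → ℝ) (e : ℝ) (he : 0 ≤ e) (σ : List (Fin m)) (x : ℝ)
    (hx : |x| ≤ bmax b / (1 - lam) + e) :
    |SW lam p b σ x| ≤ bmax b / (1 - lam) + e := by
  induction σ with
  | nil => exact hx
  | cons i σ ih =>
    have h : SW lam p b (i :: σ) x = lam ^ p i * SW lam p b σ x + b i := rfl
    have hpow : lam ^ p i ≤ lam := by
      calc lam ^ p i ≤ lam ^ 1 := pow_le_pow_of_le_one h0.le h1.le (hp i)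
        _ = lam := pow_one _
    rw [h]
    have hl : 0 < 1 - lam := by linarith
    have e2 : bmax b / (1 - lam) = lam * (bmax b / (1 - lam)) + bmax b := by
      field_simp; ring
    calc |lam ^ p i * SW lam p b σ x + b i|
        ≤ |lam ^ p i * SW lam p b σ x| + |b i| := abs_add_le _ _
      _ = lam ^ p i * |SW lam p b σ x| + |b i| := by
          rw [abs_mul, abs_of_pos (pow_pos h0 _)]
      _ ≤ lam * (bmax b / (1 - lam) + e) + bmax b := by
          have := abs_le_bmax b i
          gcongr
      _ ≤ bmax b / (1 - lam) + e := by nlinarith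

theorem wordB_bound {lam : ℝ} (h0 : 0 < lam) (h1 : lam < 1) (p : Fin m → ℕ) (hp : ∀ i, 1 ≤ p i)
    (b : Fin m → ℝ) (σ : List (Fin m)) :
    |wordB lam p b σ| ≤ bmax b / (1 - lam) := by
  have := SW_bound h0 h1 p hp b 0 le_rfl σ 0 (by
    have := bmax_nonneg b
    have : 0 < 1 - lam := by linarith
    simp only [abs_zero]; positivity)
  simpa [wordB] using this

theorem word_poly {lam : ℝ} (h0 : 0 < lam) (p : Fin m → ℕ) (hp : ∀ i, 1 ≤ p i)
    (b : Fin m → ℝ) (σ : List (Fin m)) (N : ℕ) (hN : wordP p σ ≤ N) :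
    ∃ R : ℝ[X], (∀ n, R.coeff n ∈ Bset b) ∧ (∀ n, N ≤ n → R.coeff n = 0) ∧
      lam ^ (1 - (N : ℤ)) * wordB lam p b σ = R.eval lam⁻¹ := by
  induction σ generalizing N with
  | nil => exact ⟨0, by simp [Bset], by simp, by simp [wordB_nil]⟩
  | cons i σ ih =>
    rw [wordP_cons] at hN
    obtain ⟨R, hR1, hR2, hR3⟩ := ih (N - p i) (by omega)
    have hpi := hp i
    refine ⟨R + Polynomial.monomial (N - 1) (b i), ?_, ?_, ?_⟩
    · intro n
      rw [Polynomial.coeff_add, Polynomial.coeff_monomial]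
      split_ifs with h
      · rw [hR2 n (by omega), zero_add]; exact Or.inr ⟨i, rfl⟩
      · rw [add_zero]; exact hR1 n
    · intro n hn
      rw [Polynomial.coeff_add, Polynomial.coeff_monomial, hR2 n (by omega),
        if_neg (by omega), zero_add]
    · rw [Polynomial.eval_add, ← hR3, Polynomial.eval_monomial, wordB_cons]
      obtain ⟨k, rfl⟩ : ∃ k, N = p i + k := ⟨N - p i, by omega⟩
      obtain ⟨l, hl⟩ : ∃ l, p i = l + 1 := ⟨p i - 1, by omega⟩
      have e1 : p i + k - p i = k := by omega
      have e2 : p i + k - 1 = l + k := by omega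
      have e3 : (1 : ℤ) - ((p i + k : ℕ) : ℤ) = -((l + k : ℕ) : ℤ) := by rw [hl]; push_cast; ring
      have e4 : lam ^ (1 - (k : ℤ)) = lam * (lam ^ k)⁻¹ := by
        rw [zpow_sub₀ h0.ne', zpow_one, zpow_natCast, div_eq_mul_inv]
      rw [e1, e2, e3, e4, zpow_neg, zpow_natCast, hl, inv_pow, pow_add, pow_succ]
      field_simp

theorem rel_poly {lam : ℝ} (h0 : 0 < lam) (p : Fin m → ℕ) (hp : ∀ i, 1 ≤ p i)
    (b : Fin m → ℝ) (T : ℕ) (hT1 : 1 ≤ T) (A B : List (Fin m))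
    (h : (rel lam p b A B).1 ≤ (T : ℤ) - 1) :
    ∃ R : ℝ[X], (∀ n, R.coeff n ∈ BB b) ∧
      lam ^ (2 - (T : ℤ)) * (rel lam p b A B).2 = R.eval lam⁻¹ := by
  simp only [rel] at h ⊢
  obtain ⟨R1, h1, -, h2⟩ := word_poly h0 p hp b A (wordP p B + T - 1) (by omega)
  obtain ⟨R2, h3, -, h4⟩ := word_poly h0 p hp b B (wordP p B + T - 1) (by omega)
  refine ⟨R1 - R2, fun n => ⟨_, h1 n, _, h3 n, by rw [Polynomial.coeff_sub]⟩, ?_⟩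
  rw [Polynomial.eval_sub, ← h2, ← h4]
  have : 1 - ((wordP p B + T - 1 : ℕ) : ℤ) = (2 - (T : ℤ)) + (-(wordP p B : ℤ)) := by
    rw [Nat.cast_sub (by omega)]; push_cast; ring
  rw [this, zpow_add₀ h0.ne']
  ring

/-- exact overlaps -/
def Overlap (lam : ℝ) (p : Fin m → ℕ) (b : Fin m → ℝ) : Prop :=
  ∃ i j : Fin m, i ≠ j ∧ ∃ β α : List (Fin m),
    wordP p (j :: α) = wordP p (i :: β) ∧ wordB lam p b (j :: α) = wordB lam p b (i :: β)

theorem SW_mem (lam : ℝ) (p : Fin m → ℕ) (b : Fin m → ℝ) (U : Set ℝ)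
    (hU : (⋃ i, Smap lam p b i '' U) ⊆ U) (σ : List (Fin m)) (x : ℝ) (hx : x ∈ U) :
    SW lam p b σ x ∈ U := by
  induction σ with
  | nil => exact hx
  | cons i σ ih => exact hU (Set.mem_iUnion.2 ⟨i, ⟨_, ih, rfl⟩⟩)

theorem not_osc_of_overlap (lam : ℝ) (p : Fin m → ℕ) (b : Fin m → ℝ)
    (h : Overlap lam p b) : ¬ OSC lam p b := by
  rintro ⟨U, ⟨x, hx⟩, -, hU, hd⟩
  obtain ⟨i, j, hij, β, α, h1, h2⟩ := h
  have e : SW lam p b (i :: β) x = SW lam p b (j :: α) x := by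
    rw [SW_eq, SW_eq, h1, h2]
  have : SW lam p b (i :: β) x ∈ Smap lam p b i '' U ∩ Smap lam p b j '' U := by
    refine ⟨⟨_, SW_mem lam p b U hU β x hx, rfl⟩, ?_⟩
    rw [e]
    exact ⟨_, SW_mem lam p b U hU α x hx, rfl⟩
  rw [hd i j hij] at this
  exact this

theorem path_words {lam : ℝ} (h0 : lam ≠ 0) (p : Fin m → ℕ) (b : Fin m → ℝ) (T : ℕ)
    (v : ℤ × ℝ) (h : Relation.ReflTransGen (edge lam p b T) v ((0 : ℤ), (0 : ℝ))) :
    ∀ A B, v = rel lam p b A B → ∃ α β, rel lam p b (A ++ α) (B ++ β) = (0, 0) := by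
  induction h using Relation.ReflTransGen.head_induction_on with
  | refl => intro A B h; exact ⟨[], [], by simpa using h.symm⟩
  | head he _ ih =>
    rintro A B rfl
    obtain ⟨-, -, α, β, -, -, -, -, h1, h2⟩ := he
    obtain ⟨k1, k2⟩ := rel_append h0 p b A B α β
    obtain ⟨α', β', h⟩ := ih (A ++ α) (B ++ β)
      (Prod.ext (h1.trans k1.symm) (h2.trans k2.symm))
    exact ⟨α ++ α', β ++ β', by simpa using h⟩

theorem rel_mem_Xi {lam : ℝ} (h0 : 0 < lam) (h1 : lam < 1) (p : Fin m → ℕ) (hp : ∀ i, 1 ≤ p i)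
    (b : Fin m → ℝ) (T : ℕ) (hT1 : 1 ≤ T) (A B α β : List (Fin m))
    (hz : rel lam p b (A ++ α) (B ++ β) = (0, 0))
    (h : |(rel lam p b A B).1| ≤ (T : ℤ) - 1) : rel lam p b A B ∈ Xi lam b T := by
  refine ⟨h, ?_, rel_poly h0 p hp b T hT1 A B (abs_le.1 h).2⟩
  obtain ⟨-, k⟩ := rel_append h0.ne' p b A B α β
  rw [hz] at k
  generalize rel lam p b A B = u at *
  obtain ⟨q, c⟩ := u
  simp only at k h ⊢
  have hc : c = wordB lam p b β - lam ^ q * wordB lam p b α := by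
    rw [zpow_sub₀ h0.ne', zpow_neg] at k
    have : lam ^ (wordP p β : ℤ) ≠ 0 := (zpow_pos h0 _).ne'
    field_simp at k
    linarith
  have hq : lam ^ q ≤ lam ^ (1 - (T : ℤ)) :=
    zpow_le_zpow_right_of_le_one₀ h0 h1.le (by have := (abs_le.1 h).1; linarith)
  have ha := wordB_bound h0 h1 p hp b α
  have hb := wordB_bound h0 h1 p hp b β
  have hq0 : 0 < lam ^ q := zpow_pos h0 _
  rw [hc]
  calc |wordB lam p b β - lam ^ q * wordB lam p b α|
      ≤ |wordB lam p b β| + |lam ^ q * wordB lam p b α| := abs_sub _ _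
    _ = |wordB lam p b β| + lam ^ q * |wordB lam p b α| := by rw [abs_mul, abs_of_pos hq0]
    _ ≤ bmax b / (1 - lam) + lam ^ (1 - (T : ℤ)) * (bmax b / (1 - lam)) := by gcongr
    _ = _ := by ring

theorem path_of_words {lam : ℝ} (h0 : 0 < lam) (h1 : lam < 1) (p : Fin m → ℕ)
    (hp : ∀ i, 1 ≤ p i) (b : Fin m → ℝ) (T : ℕ) (hT1 : 1 ≤ T) (hpT : ∀ i, p i ≤ T)
    (i0 : Fin m) (n : ℕ) :
    ∀ A B α β : List (Fin m), α.length + β.length ≤ n →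
      rel lam p b (A ++ α) (B ++ β) = (0, 0) → |(rel lam p b A B).1| ≤ (T : ℤ) - 1 →
      Relation.ReflTransGen (edge lam p b T) (rel lam p b A B) ((0 : ℤ), (0 : ℝ)) := by
  induction n with
  | zero =>
    intro A B α β hn hz _
    have ha : α = [] := List.eq_nil_of_length_eq_zero (by omega)
    have hb : β = [] := List.eq_nil_of_length_eq_zero (by omega)
    subst ha hb
    simp only [List.append_nil] at hz
    rw [hz]
  | succ n ih =>
    intro A B α β hn hz hq
    -- one step of the path, for a chosen splitting
    have step : ∀ α1 α2 β1 β2 : List (Fin m), rel lam p b (A ++ (α1 ++ α2)) (B ++ (β1 ++ β2)) = (0, 0) →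
        1 ≤ wordP p α1 → wordP p α1 ≤ 2 * T - 1 → 1 ≤ wordP p β1 → wordP p β1 ≤ 2 * T - 1 →
        |(wordP p α1 : ℤ) + (rel lam p b A B).1 - (wordP p β1 : ℤ)| ≤ (T : ℤ) - 1 →
        edge lam p b T (rel lam p b A B) (rel lam p b (A ++ α1) (B ++ β1)) := by
      intro α1 α2 β1 β2 hz' ha ha' hb hb' hq'
      obtain ⟨k1, k2⟩ := rel_append h0.ne' p b A B α1 β1
      refine ⟨rel_mem_Xi h0 h1 p hp b T hT1 A B _ _ hz' hq,
        rel_mem_Xi h0 h1 p hp b T hT1 (A ++ α1) (B ++ β1) α2 β2 (by simpa using hz') ?_,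
        α1, β1, ha, ha', hb, hb', k1, k2⟩
      rw [k1]; exact hq'
    have hz1 := (rel_eq_zero h0.ne' p b _ _).1 hz
    have hzP := hz1.1
    rw [wordP_append, wordP_append] at hzP
    have hq1 : (rel lam p b A B).1 = (wordP p A : ℤ) - wordP p B := rfl
    have hq2 := abs_le.1 hq
    rw [hq1] at hq2
    -- the final step
    have fin : wordP p α ≤ T - 1 → wordP p β ≤ T - 1 →
        Relation.ReflTransGen (edge lam p b T) (rel lam p b A B) ((0 : ℤ), (0 : ℝ)) := by
      intro ha hb
      have hz' : rel lam p b (A ++ (α ++ [i0])) (B ++ (β ++ [i0])) = (0, 0) := by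
        rw [rel_eq_zero h0.ne', ← List.append_assoc, ← List.append_assoc, wordP_append,
          wordP_append (σ := B ++ β), wordB_append, wordB_append (σ := B ++ β), hz1.1, hz1.2]
        exact ⟨rfl, rfl⟩
      have hi : wordP p [i0] = p i0 := by simp [wordP]
      have := hp i0
      have := hpT i0
      have e := step (α ++ [i0]) [] (β ++ [i0]) [] (by simpa using hz')
        (by rw [wordP_append]; omega) (by rw [wordP_append]; omega)
        (by rw [wordP_append]; omega) (by rw [wordP_append]; omega)
        (by rw [hq1, wordP_append, wordP_append, abs_le]; push_cast; omega)
      rw [hz'] at e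
      exact Relation.ReflTransGen.single e
    rcases le_total (wordP p B) (wordP p A) with hle | hle
    · -- `α` is ahead
      cases α with
      | nil => rw [wordP_nil] at hzP; exact fin (by rw [wordP_nil]; omega) (by omega)
      | cons a α =>
        have hpa := hp a
        have hpaT := hpT a
        rw [wordP_cons] at hzP
        obtain ⟨β1, β2, rfl, s1, s2⟩ := split_word p T hT1 hpT β (wordP p A - wordP p B + 1)
          (by omega)
        have hi : wordP p [a] = p a := by simp [wordP]
        have e := step [a] α β1 β2 (by simpa using hz) (by omega) (by omega) (by omega) (by omega)
          (by rw [hq1, abs_le]; omega)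
        refine Relation.ReflTransGen.head e (ih (A ++ [a]) (B ++ β1) α β2 ?_ ?_ e.2.1.1)
        · simp only [List.length_cons, List.length_append] at hn; omega
        · simpa using hz
    · cases β with
      | nil => rw [wordP_nil] at hzP; exact fin (by omega) (by rw [wordP_nil]; omega)
      | cons a β =>
        have hpa := hp a
        have hpaT := hpT a
        rw [wordP_cons] at hzP
        obtain ⟨α1, α2, rfl, s1, s2⟩ := split_word p T hT1 hpT α (wordP p B - wordP p A + 1)
          (by omega)
        have hi : wordP p [a] = p a := by simp [wordP]
        have e := step α1 α2 [a] β (by simpa using hz) (by omega) (by omega) (by omega) (by omega)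
          (by rw [hq1, abs_le]; omega)
        refine Relation.ReflTransGen.head e (ih (A ++ α1) (B ++ [a]) α2 β ?_ ?_ e.2.1.1)
        · simp only [List.length_cons, List.length_append] at hn; omega
        · simpa using hz

/-- The neighbourhood type of a word. -/
def Nbr (lam : ℝ) (p : Fin m → ℕ) (b : Fin m → ℝ) (T : ℕ) (r : ℝ) (I : List (Fin m)) :
    Set (ℤ × ℝ) :=
  {u | 0 ≤ u.1 ∧ u.1 ≤ (T : ℤ) - 1 ∧ |u.2| ≤ 2 * r ∧ ∃ J, u = rel lam p b J I}

theorem finite_poly {lam : ℝ} (h0 : 0 < lam) (hPisot : IsPisot lam⁻¹) (b : Fin m → ℝ)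
    (hbZ : ∀ i, ∃ z : ℤ, b i = (z : ℝ)) (T : ℕ) (M : ℝ) :
    {x : ℝ | |x| ≤ M ∧ ∃ R : ℝ[X], (∀ n, R.coeff n ∈ BB b) ∧
      lam ^ (2 - (T : ℤ)) * x = R.eval lam⁻¹}.Finite := by
  have hne : lam ^ (2 - (T : ℤ)) ≠ 0 := (zpow_pos h0 _).ne'
  have hfin := garsia lam⁻¹ hPisot (lam ^ (2 - (T : ℤ)) * M) (2 * bmax b)
  refine Set.Finite.of_finite_image (f := fun x => lam ^ (2 - (T : ℤ)) * x) (hfin.subset ?_)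
    (fun x _ y _ hxy => mul_left_cancel₀ hne hxy)
  rintro _ ⟨x, ⟨hx, R, hR, hxR⟩, rfl⟩
  have hBs : ∀ u ∈ Bset b, (∃ z : ℤ, (z : ℝ) = u) ∧ |u| ≤ bmax b := by
    rintro u (rfl | ⟨i, rfl⟩)
    · exact ⟨⟨0, by simp⟩, by simpa using bmax_nonneg b⟩
    · obtain ⟨z, hz⟩ := hbZ i
      exact ⟨⟨z, hz.symm⟩, abs_le_bmax b i⟩
  have hBB : ∀ u ∈ BB b, (∃ z : ℤ, (z : ℝ) = u) ∧ |u| ≤ 2 * bmax b := by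
    rintro _ ⟨u, hu, v, hv, rfl⟩
    obtain ⟨⟨z, hz⟩, hu'⟩ := hBs u hu
    obtain ⟨⟨w, hw⟩, hv'⟩ := hBs v hv
    refine ⟨⟨z - w, by push_cast; rw [hz, hw]⟩, ?_⟩
    have := abs_sub u v
    linarith
  have hl : R ∈ Polynomial.lifts (algebraMap ℤ ℝ) := by
    rw [Polynomial.lifts_iff_coeff_lifts]
    intro n
    obtain ⟨z, hz⟩ := (hBB _ (hR n)).1
    exact ⟨z, by simpa using hz⟩
  obtain ⟨Q, rfl⟩ := (Polynomial.mem_lifts _).1 hl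
  refine ⟨?_, Q, ?_, ?_⟩
  · simp only
    rw [abs_mul, abs_of_pos (zpow_pos h0 _)]
    exact mul_le_mul_of_nonneg_left hx (zpow_pos h0 _).le
  · intro n
    have := (hBB _ (hR n)).2
    simpa [Polynomial.coeff_map] using this
  · simp only
    rw [hxR, Polynomial.eval_map_algebraMap]

theorem osc_of_not_overlap {lam : ℝ} (h0 : 0 < lam) (h1 : lam < 1) (hPisot : IsPisot lam⁻¹)
    (p : Fin m → ℕ) (hp : ∀ i, 1 ≤ p i) (b : Fin m → ℝ) (hbZ : ∀ i, ∃ z : ℤ, b i = (z : ℝ))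
    (T : ℕ) (hT1 : 1 ≤ T) (hpT : ∀ i, p i ≤ T) (hno : ¬ Overlap lam p b) : OSC lam p b := by
  obtain ⟨r, hr⟩ : ∃ r, r = bmax b / (1 - lam) + 1 := ⟨_, rfl⟩
  have hr0 : 0 < r := by
    have := bmax_nonneg b
    have : 0 < 1 - lam := by linarith
    rw [hr]; positivity
  -- finiteness of the neighbourhood types
  obtain ⟨F, hF⟩ : ∃ F : Set (ℤ × ℝ), F.Finite ∧ ∀ I, Nbr lam p b T r I ⊆ F := by
    refine ⟨_, (Set.finite_Icc (0 : ℤ) ((T : ℤ) - 1)).prod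
      (finite_poly h0 hPisot b hbZ T (2 * r)), ?_⟩
    rintro I u ⟨u1, u2, u3, J, rfl⟩
    exact ⟨⟨u1, u2⟩, u3, rel_poly h0 p hp b T hT1 J I u2⟩
  obtain ⟨hFfin, hNF⟩ := hF
  obtain ⟨I0, hI0⟩ : ∃ I0, ∀ I, (Nbr lam p b T r I).ncard ≤ (Nbr lam p b T r I0).ncard := by
    have hbdd : BddAbove (Set.range fun I => (Nbr lam p b T r I).ncard) := by
      refine ⟨F.ncard, ?_⟩
      rintro _ ⟨I, rfl⟩
      exact Set.ncard_le_ncard (hNF I) hFfin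
    obtain ⟨I0, h⟩ := Nat.sSup_mem (Set.range_nonempty _) hbdd
    refine ⟨I0, fun I => ?_⟩
    have h' : (Nbr lam p b T r I0).ncard = _ := h
    rw [h']
    exact le_csSup hbdd ⟨I, rfl⟩
  have hstab : ∀ K, Nbr lam p b T r (K ++ I0) = Nbr lam p b T r I0 := by
    intro K
    symm
    refine Set.eq_of_subset_of_ncard_le ?_ (hI0 _) (hFfin.subset (hNF _))
    rintro u ⟨u1, u2, u3, J, rfl⟩
    refine ⟨u1, u2, u3, K ++ J, ?_⟩
    simp only [rel, wordP_append, wordB_append, Prod.mk.injEq]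
    constructor
    · push_cast; ring
    · push_cast
      rw [neg_add, zpow_add₀ h0.ne', zpow_neg, zpow_neg, zpow_natCast, zpow_natCast]
      have := (pow_pos h0 (wordP p K)).ne'
      have := (pow_pos h0 (wordP p I0)).ne'
      field_simp
      ring
  -- the key disjointness
  have core : ∀ (i j : Fin m) (K K' : List (Fin m)) (y y' : ℝ), i ≠ j →
      wordP p (i :: (K ++ I0)) ≤ wordP p (j :: (K' ++ I0)) → |y| < r → |y'| < r →
      SW lam p b (i :: (K ++ I0)) y = SW lam p b (j :: (K' ++ I0)) y' → False := by
    intro i j K K' y y' hij hle hy hy' heq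
    obtain ⟨J, M, hL, hJ1, hJ2⟩ := split_word p T hT1 hpT _ _ hle
    have hIpos : 1 ≤ wordP p (i :: (K ++ I0)) := wordP_pos p hp (by simp)
    cases J with
    | nil => rw [wordP_nil] at hJ1; omega
    | cons j' J =>
      rw [List.cons_append, List.cons.injEq] at hL
      obtain ⟨rfl, hL⟩ := hL
      rw [hL, ← List.cons_append (a := j), SW_eq, SW_eq, wordB_append (σ := j :: J),
        wordP_append (σ := j :: J), pow_add] at heq
      have hx' := SW_bound h0 h1 p hp b 1 zero_le_one M y' (by rw [← hr]; exact hy'.le)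
      rw [← hr, SW_eq] at hx'
      set x' := lam ^ wordP p M * y' + wordB lam p b M with hx'def
      obtain ⟨q, hq⟩ : ∃ q, wordP p (j :: J) = wordP p (i :: (K ++ I0)) + q :=
        ⟨_, (Nat.add_sub_of_le hJ1).symm⟩
      have hPI := pow_pos h0 (wordP p (i :: (K ++ I0)))
      have hc : (rel lam p b (j :: J) (i :: (K ++ I0))).2 = y - lam ^ q * x' := by
        simp only [rel]
        rw [zpow_neg, zpow_natCast, inv_mul_eq_iff_eq_mul₀ hPI.ne']
        rw [hq, pow_add] at heq
        rw [hx'def]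
        linarith
      have hmem : rel lam p b (j :: J) (i :: (K ++ I0)) ∈ Nbr lam p b T r ((i :: K) ++ I0) := by
        refine ⟨?_, ?_, ?_, j :: J, rfl⟩
        · simp only [rel]; omega
        · simp only [rel]; omega
        · rw [hc]
          have hl : lam ^ q ≤ 1 := pow_le_one₀ h0.le h1.le
          have hl0 : 0 < lam ^ q := pow_pos h0 _
          calc |y - lam ^ q * x'| ≤ |y| + |lam ^ q * x'| := abs_sub _ _
            _ = |y| + lam ^ q * |x'| := by rw [abs_mul, abs_of_pos hl0]
            _ ≤ r + 1 * r := by gcongr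
            _ = 2 * r := by ring
      rw [hstab] at hmem
      obtain ⟨-, -, -, J', hJ'⟩ := hmem
      apply hno
      refine ⟨i, j, hij, K ++ J', J, ?_⟩
      have e1 := congrArg Prod.fst hJ'
      have e2 := congrArg Prod.snd hJ'
      simp only [rel] at e1 e2
      rw [← List.cons_append] at e1 e2 ⊢
      rw [wordP_append] at e1 e2
      rw [wordB_append] at e2
      rw [wordP_append, wordB_append]
      constructor
      · push_cast at e1; omega
      · push_cast at e2
        rw [neg_add, zpow_add₀ h0.ne', zpow_neg, zpow_neg, zpow_natCast, zpow_natCast] at e2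
        have := (pow_pos h0 (wordP p (i :: K))).ne'
        have := (pow_pos h0 (wordP p I0)).ne'
        field_simp at e2
        linarith
  -- the open set
  refine ⟨⋃ K : List (Fin m), {x | |(lam ^ wordP p (K ++ I0))⁻¹ * (x - wordB lam p b (K ++ I0))| < r},
    ?_, ?_, ?_, ?_⟩
  · refine ⟨wordB lam p b ([] ++ I0), Set.mem_iUnion.2 ⟨[], ?_⟩⟩
    simpa using hr0
  · refine isOpen_iUnion fun K => ?_
    exact isOpen_lt (by fun_prop) continuous_const
  all_goals
    have hmemU : ∀ x, (x ∈ ⋃ K : List (Fin m),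
        {x | |(lam ^ wordP p (K ++ I0))⁻¹ * (x - wordB lam p b (K ++ I0))| < r}) ↔
        ∃ K y, |y| < r ∧ SW lam p b (K ++ I0) y = x := by
      intro x
      rw [Set.mem_iUnion]
      refine exists_congr fun K => ?_
      have hP := (pow_pos h0 (wordP p (K ++ I0))).ne'
      constructor
      · intro h
        refine ⟨_, h, ?_⟩
        rw [SW_eq, mul_inv_cancel_left₀ hP]; ring
      · rintro ⟨y, hy, rfl⟩
        rw [SW_eq]
        rw [Set.mem_ofPred_eq, add_sub_cancel_right, inv_mul_cancel_left₀ hP]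
        exact hy
  · intro x hx
    obtain ⟨i, z, hz, rfl⟩ := Set.mem_iUnion.1 hx
    obtain ⟨K, y, hy, rfl⟩ := (hmemU z).1 hz
    exact (hmemU _).2 ⟨i :: K, y, hy, rfl⟩
  · intro i j hij
    rw [Set.eq_empty_iff_forall_notMem]
    rintro x ⟨⟨z, hz, hzx⟩, ⟨w, hw, hwx⟩⟩
    obtain ⟨K, y, hy, rfl⟩ := (hmemU z).1 hz
    obtain ⟨K', y', hy', rfl⟩ := (hmemU w).1 hw
    have e : SW lam p b (i :: (K ++ I0)) y = SW lam p b (j :: (K' ++ I0)) y' :=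
      hzx.trans hwx.symm
    rcases le_total (wordP p (i :: (K ++ I0))) (wordP p (j :: (K' ++ I0))) with h | h
    · exact core i j K K' y y' hij h hy hy' e
    · exact core j i K' K y' y hij.symm h hy' hy e.symm

theorem stmt11 (lam : ℝ) (hlam0 : 0 < lam) (hlam1 : lam < 1)
    (hPisot : IsPisot lam⁻¹)
    {m : ℕ} (hm : 2 ≤ m) (p : Fin m → ℕ) (hp : ∀ i, 1 ≤ p i)
    (b : Fin m → ℝ) (hbZ : ∀ i, ∃ z : ℤ, b i = (z : ℝ))
    (T : ℕ) (hT : T = Finset.univ.sup p) :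
    ¬ OSC lam p b ↔
      ∃ v ∈ Lam lam p b T,
        Relation.ReflTransGen (edge lam p b T) v ((0 : ℤ), (0 : ℝ)) := by
  have hpT : ∀ i, p i ≤ T := fun i => hT ▸ Finset.le_sup (Finset.mem_univ i)
  have hT1 : 1 ≤ T := (hp ⟨0, by omega⟩).trans (hpT _)
  have hv : ∀ i j : Fin m, (((p j : ℤ) - (p i : ℤ), lam ^ (-(p i : ℤ)) * (b j - b i)) : ℤ × ℝ)
      = rel lam p b [j] [i] := by
    intro i j
    simp [rel, wordP_cons, wordP_nil, wordB_cons, wordB_nil]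
  constructor
  · intro hno
    have hov : Overlap lam p b := by
      by_contra h
      exact hno (osc_of_not_overlap hlam0 hlam1 hPisot p hp b hbZ T hT1 hpT h)
    obtain ⟨i, j, hij, β, α, h1, h2⟩ := hov
    have hz : rel lam p b ([j] ++ α) ([i] ++ β) = (0, 0) :=
      (rel_eq_zero hlam0.ne' p b _ _).2 ⟨h1, h2⟩
    have hq : |(rel lam p b [j] [i]).1| ≤ (T : ℤ) - 1 := by
      rw [← hv]
      have := hp i
      have := hp j
      have := hpT i
      have := hpT j
      rw [abs_le]
      constructor <;> simp only <;> omega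
    exact ⟨rel lam p b [j] [i],
      ⟨rel_mem_Xi hlam0 hlam1 p hp b T hT1 _ _ α β hz hq, i, j, hij, (hv i j).symm⟩,
      path_of_words hlam0 hlam1 p hp b T hT1 hpT i _ _ _ α β le_rfl hz hq⟩
  · rintro ⟨v, ⟨-, i, j, hij, rfl⟩, hpath⟩
    obtain ⟨α, β, h⟩ := path_words hlam0.ne' p b T _ hpath [j] [i] (hv i j)
    obtain ⟨h1, h2⟩ := (rel_eq_zero hlam0.ne' p b _ _).1 h
    exact not_osc_of_overlap lam p b ⟨i, j, hij, β, α, h1, h2⟩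

end PVOSC
end
end

section
/- Assume ∑_{i=1}^m λ^{p_i} = 1 (i.e., the similarity dimension of E equals 1). Then the interior of E is nonempty if and only if the open set condition holds for {S_i}_{i=1}^m. -/
open Polynomial Filter

noncomputable section

namespace PVOSC

variable {m : ℕ}

open scoped Pointwise in
theorem aux_vol {m : ℕ} (lam : ℝ) (hlam0 : 0 < lam) (p : Fin m → ℕ) (b : Fin m → ℝ)
    (i : Fin m) (A : Set ℝ) :
    MeasureTheory.volume (Smap lam p b i '' A)
      = ENNReal.ofReal (lam ^ p i) * MeasureTheory.volume A := by
  have h : Smap lam p b i '' A = (fun x => x + b i) '' ((lam ^ p i) • A) := by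
    ext y
    simp only [Set.mem_image, Set.mem_smul_set, Smap, smul_eq_mul]
    constructor
    · rintro ⟨x, hx, rfl⟩
      exact ⟨_, ⟨x, hx, rfl⟩, rfl⟩
    · rintro ⟨_, ⟨x, hx, rfl⟩, rfl⟩
      exact ⟨x, hx, rfl⟩
  rw [h, Set.image_add_right, MeasureTheory.measure_preimage_add_right,
    MeasureTheory.Measure.addHaar_smul]
  simp [abs_of_pos hlam0]

theorem aux_sum {m : ℕ} (lam : ℝ) (hlam0 : 0 < lam) (p : Fin m → ℕ) (b : Fin m → ℝ)
    (hsum : ∑ i : Fin m, lam ^ (p i) = 1) (A : Set ℝ) :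
    ∑ i, MeasureTheory.volume (Smap lam p b i '' A) = MeasureTheory.volume A := by
  simp only [aux_vol lam hlam0]
  rw [← Finset.sum_mul, ← ENNReal.ofReal_sum_of_nonneg (fun i _ => by positivity), hsum]
  simp

theorem aux_open {m : ℕ} (lam : ℝ) (hlam0 : 0 < lam) (p : Fin m → ℕ) (b : Fin m → ℝ)
    (i : Fin m) (A : Set ℝ) (hA : IsOpen A) : IsOpen (Smap lam p b i '' A) := by
  have hne : lam ^ p i ≠ 0 := by positivity
  have h : Smap lam p b i = ((Homeomorph.mulLeft₀ _ hne).trans (Homeomorph.addRight (b i))) := by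
    ext x; simp [Smap]
  rw [h]
  exact (Homeomorph.isOpenMap _) _ hA

theorem aux_cont {m : ℕ} (lam : ℝ) (p : Fin m → ℕ) (b : Fin m → ℝ)
    (i : Fin m) : Continuous (Smap lam p b i) := by
  unfold Smap; fun_prop

theorem aux_fwd {m : ℕ} (lam : ℝ) (hlam0 : 0 < lam) (p : Fin m → ℕ) (b : Fin m → ℝ)
    (E : Set ℝ) (hEc : IsCompact E)
    (hEfix : E = ⋃ i, Smap lam p b i '' E)
    (hsum : ∑ i : Fin m, lam ^ (p i) = 1) (hne : (interior E).Nonempty) : OSC lam p b := by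
  refine ⟨interior E, hne, isOpen_interior, ?_, ?_⟩
  · refine Set.iUnion_subset fun i => interior_maximal ?_ (aux_open lam hlam0 p b i _ isOpen_interior)
    refine (Set.image_mono interior_subset).trans ?_
    conv_rhs => rw [hEfix]
    exact Set.subset_iUnion (fun i => Smap lam p b i '' E) i
  · intro i j hij
    by_contra hcon
    set W := Smap lam p b i '' interior E ∩ Smap lam p b j '' interior E with hW
    have hWo : IsOpen W := (aux_open lam hlam0 p b i _ isOpen_interior).inter
      (aux_open lam hlam0 p b j _ isOpen_interior)
    have hWpos : 0 < MeasureTheory.volume W :=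
      hWo.measure_pos _ (Set.nonempty_iff_ne_empty.mpr hcon)
    have hWi : W ⊆ Smap lam p b i '' E :=
      Set.inter_subset_left.trans (Set.image_mono interior_subset)
    have hWj : W ⊆ Smap lam p b j '' E :=
      Set.inter_subset_right.trans (Set.image_mono interior_subset)
    let A : Fin m → Set ℝ := fun k => if k = j then Smap lam p b k '' E \ W else Smap lam p b k '' E
    have hsub : E ⊆ ⋃ k, A k := by
      intro x hx
      rw [hEfix] at hx
      obtain ⟨k, hk⟩ := Set.mem_iUnion.1 hx
      by_cases hxW : x ∈ W
      · exact Set.mem_iUnion.2 ⟨i, by simpa [A, hij] using hWi hxW⟩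
      · refine Set.mem_iUnion.2 ⟨k, ?_⟩
        by_cases hkj : k = j
        · simp only [A, if_pos hkj]; exact ⟨hk, hxW⟩
        · simp only [A, if_neg hkj]; exact hk
    have h1 : MeasureTheory.volume E ≤ ∑ k, MeasureTheory.volume (A k) :=
      (MeasureTheory.measure_mono hsub).trans
        (MeasureTheory.measure_iUnion_fintype_le _ _)
    have h2 : ∑ k, (MeasureTheory.volume (A k) + if k = j then MeasureTheory.volume W else 0)
        = MeasureTheory.volume E := by
      rw [← aux_sum lam hlam0 p b hsum E]
      refine Finset.sum_congr rfl fun k _ => ?_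
      by_cases hkj : k = j
      · subst hkj
        simp only [A, if_true]
        have := MeasureTheory.measure_diff_add_inter (μ := MeasureTheory.volume)
          (Smap lam p b k '' E) hWo.measurableSet
        rwa [Set.inter_eq_right.2 hWj] at this
      · simp [A, hkj]
    rw [Finset.sum_add_distrib, Finset.sum_ite_eq' Finset.univ j] at h2
    simp only [Finset.mem_univ, if_true] at h2
    have hfin : MeasureTheory.volume E ≠ ⊤ := hEc.measure_lt_top.ne
    have h3 : MeasureTheory.volume E + MeasureTheory.volume W ≤ MeasureTheory.volume E :=
      (add_le_add_left h1 _).trans h2.le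
    exact absurd h3 (not_le.2 (ENNReal.lt_add_right hfin hWpos.ne'))

theorem aux_bwd {m : ℕ} (lam : ℝ) (hlam0 : 0 < lam) (hlam1 : lam < 1)
    (p : Fin m → ℕ) (hp : ∀ i, 1 ≤ p i) (b : Fin m → ℝ)
    (E : Set ℝ) (hEc : IsCompact E) (hEne : E.Nonempty)
    (hEfix : E = ⋃ i, Smap lam p b i '' E)
    (hsum : ∑ i : Fin m, lam ^ (p i) = 1) (hosc : OSC lam p b) : (interior E).Nonempty := by
  obtain ⟨U, ⟨u, hu⟩, hUo, hUsub, hUd⟩ := hosc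
  have hpow : ∀ i, lam ^ p i ≤ lam := fun i => by
    simpa using pow_le_pow_of_le_one hlam0.le hlam1.le (hp i)
  have h1l : 0 < 1 - lam := by linarith
  set C : ℝ := ∑ i, |b i| with hC
  have hCb : ∀ i, |b i| ≤ C := fun i =>
    Finset.single_le_sum (f := fun i => |b i|) (fun k _ => abs_nonneg _) (Finset.mem_univ i)
  set R : ℝ := C / (1 - lam) + |u| + 1 with hR
  have hCn : 0 ≤ C := Finset.sum_nonneg fun k _ => abs_nonneg _
  have hRC : C ≤ (1 - lam) * R := by
    have : (1 - lam) * (C / (1 - lam)) = C := by field_simp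
    have h2 : 0 ≤ (1 - lam) * (|u| + 1) := by positivity
    rw [hR]; nlinarith
  have hRu : |u| < R := by
    have : 0 ≤ C / (1 - lam) := by positivity
    rw [hR]; linarith
  have hball : ∀ i x, |x| < R → |Smap lam p b i x| < R := by
    intro i x hx
    have h3 : |Smap lam p b i x| ≤ lam ^ p i * |x| + |b i| := by
      unfold Smap
      refine (abs_add_le _ _).trans ?_
      rw [abs_mul, abs_of_pos (by positivity : 0 < lam ^ p i)]
    have h4 : lam ^ p i * |x| ≤ lam * |x| := mul_le_mul_of_nonneg_right (hpow i) (abs_nonneg _)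
    have h5 : lam * |x| < lam * R := mul_lt_mul_of_pos_left hx hlam0
    have := hCb i
    linarith
  set V : Set ℝ := U ∩ Metric.ball 0 R with hV
  have hVo : IsOpen V := hUo.inter Metric.isOpen_ball
  have hVne : V.Nonempty := ⟨u, hu, by simpa using hRu⟩
  have hVsub : ∀ i, Smap lam p b i '' V ⊆ V := by
    rintro i _ ⟨x, ⟨hxU, hxB⟩, rfl⟩
    refine ⟨hUsub (Set.mem_iUnion.2 ⟨i, x, hxU, rfl⟩), ?_⟩
    simpa using hball i x (by simpa using hxB)
  have hVd : Pairwise (Function.onFun Disjoint fun i => Smap lam p b i '' V) := by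
    intro i j hij
    have := Set.disjoint_iff_inter_eq_empty.2 (hUd i j hij)
    exact this.mono (Set.image_mono Set.inter_subset_left) (Set.image_mono Set.inter_subset_left)
  have hVb : Bornology.IsBounded V := Metric.isBounded_ball.subset Set.inter_subset_right
  have hKc : IsCompact (closure V) := hVb.isCompact_closure
  have hvol : MeasureTheory.volume (⋃ i, Smap lam p b i '' V) = MeasureTheory.volume V := by
    rw [MeasureTheory.measure_iUnion hVd fun i => (aux_open lam hlam0 p b i _ hVo).measurableSet,
      tsum_fintype, aux_sum lam hlam0 p b hsum]
  have hnull : MeasureTheory.volume (V \ ⋃ i, Smap lam p b i '' V) = 0 := by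
    rw [MeasureTheory.measure_diff (Set.iUnion_subset hVsub)
      (isOpen_iUnion fun i => aux_open lam hlam0 p b i _ hVo).measurableSet.nullMeasurableSet
      (by rw [hvol]; exact hVb.measure_lt_top.ne), hvol, tsub_self]
  have hFc : IsClosed (⋃ i, Smap lam p b i '' closure V) :=
    isClosed_iUnion_of_finite fun i => (hKc.image (aux_cont lam p b i)).isClosed
  have hVF : V ⊆ ⋃ i, Smap lam p b i '' closure V := by
    have hopen : IsOpen (V \ ⋃ i, Smap lam p b i '' closure V) := hVo.sdiff hFc
    have h0 : MeasureTheory.volume (V \ ⋃ i, Smap lam p b i '' closure V) = 0 :=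
      MeasureTheory.measure_mono_null
        (Set.diff_subset_diff_right (Set.iUnion_mono fun i => Set.image_mono subset_closure)) hnull
    exact Set.diff_eq_empty.1 ((hopen.measure_eq_zero_iff _).1 h0)
  have hKF : closure V ⊆ ⋃ i, Smap lam p b i '' closure V := closure_minimal hVF hFc
  -- `closure V ⊆ E`
  obtain ⟨x, hxK, hxmax⟩ := hKc.exists_isMaxOn hVne.closure
    (Metric.continuous_infDist_pt E).continuousOn
  have hKE : closure V ⊆ E := by
    obtain ⟨i, y, hy, hyx⟩ := Set.mem_iUnion.1 (hKF hxK)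
    obtain ⟨e, he, hed⟩ := hEc.exists_infDist_eq_dist hEne y
    have hse : Smap lam p b i e ∈ E := by
      rw [hEfix]; exact Set.mem_iUnion.2 ⟨i, e, he, rfl⟩
    have h1 : Metric.infDist x E ≤ dist x (Smap lam p b i e) := Metric.infDist_le_dist_of_mem hse
    have h2 : dist x (Smap lam p b i e) = lam ^ p i * dist y e := by
      rw [← hyx, Real.dist_eq, Real.dist_eq, Smap, Smap,
        show lam ^ p i * y + b i - (lam ^ p i * e + b i) = lam ^ p i * (y - e) by ring,
        abs_mul, abs_of_pos (by positivity : 0 < lam ^ p i)]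
    have h3 : Metric.infDist y E ≤ Metric.infDist x E := hxmax hy
    have h4 : lam ^ p i * dist y e ≤ lam * dist y e :=
      mul_le_mul_of_nonneg_right (hpow i) dist_nonneg
    have h5 : Metric.infDist x E ≤ 0 := by
      rw [hed] at h3
      have := mul_le_mul_of_nonneg_left h3 hlam0.le
      nlinarith
    intro z hz
    have h6 : Metric.infDist z E ≤ Metric.infDist x E := hxmax hz
    exact (hEc.isClosed.mem_iff_infDist_zero hEne).2
      (le_antisymm (h6.trans h5) Metric.infDist_nonneg)
  exact hVne.mono (interior_maximal (subset_closure.trans hKE) hVo)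

theorem stmt14 (lam : ℝ) (hlam0 : 0 < lam) (hlam1 : lam < 1)
    (hPisot : IsPisot lam⁻¹)
    {m : ℕ} (hm : 2 ≤ m) (p : Fin m → ℕ) (hp : ∀ i, 1 ≤ p i)
    (b : Fin m → ℝ) (hbQ : ∀ i, ∃ q : ℚ, b i = (q : ℝ))
    (E : Set ℝ) (hEc : IsCompact E) (hEne : E.Nonempty)
    (hEfix : E = ⋃ i, Smap lam p b i '' E)
    (hsum : ∑ i : Fin m, lam ^ (p i) = 1) :
    (interior E).Nonempty ↔ OSC lam p b := by
  exact ⟨aux_fwd lam hlam0 p b E hEc hEfix hsum,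
    aux_bwd lam hlam0 hlam1 p hp b E hEc hEne hEfix hsum⟩

end PVOSC
end
end

section
/- Let d* = 2·max_i|b_i|/(1−λ)². Let α and β be finite words over {1,…,m}, let q ∈ ℤ with q ≥ 0 and c ∈ ℝ, and set (q',c') = (p_β,b_β)⁻¹·(q,c)·(p_α,b_α), so that c' = λ^{−p_β}c + λ^{−p_β}(λ^q·b_α − b_β). If |c| ≥ d*, then |c'| ≥ |c|. -/
open Polynomial Filter

noncomputable section

namespace PVOSC

variable {m : ℕ}

theorem abs_wordB_le (lam : ℝ) (hlam0 : 0 < lam) (hlam1 : lam < 1)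
    {m : ℕ} (p : Fin m → ℕ) (hp : ∀ i, 1 ≤ p i) (b : Fin m → ℝ) (σ : List (Fin m)) :
    |wordB lam p b σ| * (1 - lam) ≤ bmax b := by
  have hM : ∀ i, |b i| ≤ bmax b := fun i =>
    le_ciSup (f := fun i => |b i|) (Set.finite_range _).bddAbove i
  have hM0 : 0 ≤ bmax b := Real.iSup_nonneg fun i => abs_nonneg _
  induction σ with
  | nil => simpa [wordB, SW] using hM0
  | cons i σ ih =>
    have h1 : wordB lam p b (i :: σ) = lam ^ p i * wordB lam p b σ + b i := rfl
    have h2 : lam ^ p i ≤ lam := pow_le_of_le_one hlam0.le hlam1.le (by have := hp i; omega)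
    have h3 : |wordB lam p b (i :: σ)| ≤ lam * |wordB lam p b σ| + bmax b := by
      rw [h1]
      refine (abs_add_le _ _).trans (add_le_add ?_ (hM i))
      rw [abs_mul, abs_of_pos (pow_pos hlam0 _)]
      exact mul_le_mul_of_nonneg_right h2 (abs_nonneg _)
    nlinarith

theorem stmt15 (lam : ℝ) (hlam0 : 0 < lam) (hlam1 : lam < 1)
    {m : ℕ} (hm : 2 ≤ m) (p : Fin m → ℕ) (hp : ∀ i, 1 ≤ p i)
    (b : Fin m → ℝ) (hbZ : ∀ i, ∃ z : ℤ, b i = (z : ℝ))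
    (α β : List (Fin m)) (hα : α ≠ []) (hβ : β ≠ [])
    (q : ℤ) (hq : 0 ≤ q) (c : ℝ)
    (hc : 2 * bmax b / (1 - lam) ^ 2 ≤ |c|) :
    |c| ≤ |(gmul lam (ginv lam (elem lam p b β)) (gmul lam (q, c) (elem lam p b α))).2| := by
  have hα' := abs_wordB_le lam hlam0 hlam1 p hp b α
  have hβ' := abs_wordB_le lam hlam0 hlam1 p hp b β
  have hP : wordP p β ≠ 0 := by
    cases β with
    | nil => exact absurd rfl hβ
    | cons i t =>
      have := hp i
      simp only [wordP, List.map_cons, List.sum_cons]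
      omega
  have hX : lam ^ wordP p β ≤ lam := pow_le_of_le_one hlam0.le hlam1.le hP
  have hX0 : 0 < lam ^ wordP p β := pow_pos hlam0 _
  have hq0 : 0 < lam ^ q := zpow_pos hlam0 _
  have hq1 : lam ^ q ≤ 1 := by
    obtain ⟨n, rfl⟩ := Int.eq_ofNat_of_zero_le hq
    rw [zpow_natCast]
    exact pow_le_one₀ hlam0.le hlam1.le
  have hd : 0 < 1 - lam := by linarith
  have hc' : 2 * bmax b ≤ |c| * (1 - lam) ^ 2 := (div_le_iff₀ (by positivity)).1 hc
  simp only [gmul, ginv, elem, zpow_neg, zpow_natCast]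
  generalize wordB lam p b α = x at *
  generalize wordB lam p b β = y at *
  generalize lam ^ wordP p β = X at *
  generalize lam ^ q = Q at *
  have e : X⁻¹ * (Q * x + c) + -(X⁻¹ * y) = X⁻¹ * (c - (y - Q * x)) := by ring
  rw [e, abs_mul, abs_of_pos (inv_pos.2 hX0), inv_mul_eq_div, le_div_iff₀ hX0]
  have h1 : |c| - |y - Q * x| ≤ |c - (y - Q * x)| := abs_sub_abs_le_abs_sub _ _
  have h2 : |y - Q * x| ≤ |y| + |x| := by
    refine (abs_sub _ _).trans (add_le_add le_rfl ?_)
    rw [abs_mul, abs_of_pos hq0]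
    exact mul_le_of_le_one_left (abs_nonneg _) hq1
  have h3 : |y| + |x| ≤ |c| * (1 - lam) := by
    refine le_of_mul_le_mul_right ?_ hd
    nlinarith
  have h4 : |c| * X ≤ |c| * lam := mul_le_mul_of_nonneg_left hX (abs_nonneg _)
  linarith

end PVOSC
end
end

section
/- Assume max_i|b_i| > 0 and let d* = 2·max_i|b_i|/(1−λ)². Let M be a positive integer and α₀,…,α_M, β₀,…,β_M finite words over {1,…,m}, and let (q_k,c_k)_{k=1}^{M+1} be the sequence with the recursive structure w.r.t. ({α_k},{β_k}). If q_k ≥ 0 for all 1 ≤ k ≤ M+1 and c_{M+1} = 0, then |c_k| < d* for all 1 ≤ k ≤ M+1. -/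
open Polynomial Filter

noncomputable section

namespace PVOSC

variable {m : ℕ}

theorem aux_wordB (lam : ℝ) (hlam0 : 0 < lam) (hlam1 : lam < 1)
    {m : ℕ} (p : Fin m → ℕ) (hp : ∀ i, 1 ≤ p i) (b : Fin m → ℝ) (hbpos : 0 < bmax b)
    (σ : List (Fin m)) : |wordB lam p b σ| < bmax b / (1 - lam) := by
  have h1 : 0 < 1 - lam := by linarith
  have hD : 0 < bmax b / (1 - lam) := div_pos hbpos h1
  have hDe : bmax b / (1 - lam) = lam * (bmax b / (1 - lam)) + bmax b := by
    field_simp; ring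
  induction σ with
  | nil => simpa [wordB, SW] using hD
  | cons i σ ih =>
    have e : wordB lam p b (i :: σ) = lam ^ p i * wordB lam p b σ + b i := by
      simp [wordB, SW, Smap]
    have hb : |b i| ≤ bmax b := le_ciSup (f := fun i => |b i|) (Set.finite_range _).bddAbove i
    have hl : lam ^ p i ≤ lam := by
      simpa using pow_le_pow_of_le_one hlam0.le hlam1.le (hp i)
    rw [e]
    calc |lam ^ p i * wordB lam p b σ + b i| ≤ |lam ^ p i * wordB lam p b σ| + |b i| := abs_add_le _ _
      _ = lam ^ p i * |wordB lam p b σ| + |b i| := by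
        rw [abs_mul, abs_of_pos (pow_pos hlam0 _)]
      _ ≤ lam * |wordB lam p b σ| + bmax b := by gcongr
      _ < lam * (bmax b / (1 - lam)) + bmax b := by gcongr
      _ = _ := hDe.symm

theorem aux_step (lam : ℝ) (hlam0 : 0 < lam) (hlam1 : lam < 1)
    {m : ℕ} (p : Fin m → ℕ) (hp : ∀ i, 1 ≤ p i) (b : Fin m → ℝ) (hbpos : 0 < bmax b)
    (α β : ℕ → List (Fin m)) (k : ℕ) (hβ : β (k + 1) ≠ [])
    (hq : 0 ≤ (recSeq lam p b α β k).1)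
    (h : |(recSeq lam p b α β (k + 1)).2| < 2 * bmax b / (1 - lam) ^ 2) :
    |(recSeq lam p b α β k).2| < 2 * bmax b / (1 - lam) ^ 2 := by
  have h1 : 0 < 1 - lam := by linarith
  have hA := aux_wordB lam hlam0 hlam1 p hp b hbpos (α (k + 1))
  have hB := aux_wordB lam hlam0 hlam1 p hp b hbpos (β (k + 1))
  have hP : 1 ≤ wordP p (β (k + 1)) := by
    obtain ⟨i, l, hl⟩ := List.exists_cons_of_ne_nil hβ
    have := hp i
    rw [hl]; simp [wordP]; omega
  have hl : lam ^ wordP p (β (k + 1)) ≤ lam := by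
    simpa using pow_le_pow_of_le_one hlam0.le hlam1.le hP
  have e : (recSeq lam p b α β k).2 = lam ^ wordP p (β (k + 1)) * (recSeq lam p b α β (k + 1)).2
      - lam ^ (recSeq lam p b α β k).1 * wordB lam p b (α (k + 1)) + wordB lam p b (β (k + 1)) := by
    have hne : lam ^ wordP p (β (k + 1)) ≠ 0 := (pow_pos hlam0 _).ne'
    simp only [recSeq, gmul, ginv, elem, zpow_neg, zpow_natCast]
    field_simp
    ring
  have hz : lam ^ (recSeq lam p b α β k).1 ≤ 1 := zpow_le_one₀ hlam0 hlam1.le hq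
  have hz0 : 0 < lam ^ (recSeq lam p b α β k).1 := zpow_pos hlam0 _
  have hDe : 2 * bmax b / (1 - lam) ^ 2 =
      lam * (2 * bmax b / (1 - lam) ^ 2) + bmax b / (1 - lam) + bmax b / (1 - lam) := by
    field_simp; ring
  rw [e, hDe]
  generalize (recSeq lam p b α β (k + 1)).2 = c at *
  generalize lam ^ (recSeq lam p b α β k).1 = z at *
  have hL0 := pow_pos hlam0 (wordP p (β (k + 1)))
  generalize lam ^ wordP p (β (k + 1)) = L at *
  have t1 : |L * c| ≤ lam * (2 * bmax b / (1 - lam) ^ 2) := by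
    rw [abs_mul, abs_of_pos hL0]; gcongr
  have t2 : |z * wordB lam p b (α (k + 1))| < bmax b / (1 - lam) := by
    rw [abs_mul, abs_of_pos hz0]
    exact (mul_le_of_le_one_left (abs_nonneg _) hz).trans_lt hA
  rw [abs_le] at t1
  rw [abs_lt] at *
  constructor <;> linarith [t1.1, t1.2, t2.1, t2.2, hB.1, hB.2]

theorem stmt16 (lam : ℝ) (hlam0 : 0 < lam) (hlam1 : lam < 1)
    {m : ℕ} (hm : 2 ≤ m) (p : Fin m → ℕ) (hp : ∀ i, 1 ≤ p i)
    (b : Fin m → ℝ) (hbZ : ∀ i, ∃ z : ℤ, b i = (z : ℝ))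
    (hbpos : 0 < bmax b)
    (M : ℕ) (hM : 1 ≤ M) (α β : ℕ → List (Fin m))
    (hne : ∀ k : ℕ, k ≤ M → α k ≠ [] ∧ β k ≠ [])
    (hq : ∀ k : ℕ, k ≤ M → 0 ≤ (recSeq lam p b α β k).1)
    (hlast : (recSeq lam p b α β M).2 = 0) :
    ∀ k : ℕ, k ≤ M → |(recSeq lam p b α β k).2| < 2 * bmax b / (1 - lam) ^ 2 := by
  intro k hk
  induction hk using Nat.decreasingInduction with
  | self =>
    rw [hlast, abs_zero]
    have : 0 < 1 - lam := by linarith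
    positivity
  | of_succ k hk ih =>
    exact aux_step lam hlam0 hlam1 p hp b hbpos α β k (hne (k + 1) hk).2 (hq k hk.le) ih

end PVOSC
end
end

section
/- Let d be a real number with d ≥ 2·max_i|b_i|/(λ⁻¹ − 1). For k ∈ ℕ define 𝒟_k = {y ∈ ℝ : |y| ≤ d and y = R(λ⁻¹) for some polynomial R with all coefficients in B−B and deg R ≤ k}. Then for every k ≥ 1, 𝒟_k = {y ∈ ℝ : |y| ≤ d} ∩ (λ⁻¹·𝒟_{k−1} + (B−B)), where λ⁻¹·𝒟_{k−1} + (B−B) = {λ⁻¹y' + b : y' ∈ 𝒟_{k−1}, b ∈ B−B}. -/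
open Polynomial Filter

noncomputable section

namespace PVOSC

variable {m : ℕ}

/-- The set `𝒟_k` of values `R(λ⁻¹)`, `R` a polynomial with coefficients in `B − B`
of degree at most `k`, lying in `[−d, d]`. -/
def Dset (lam : ℝ) {m : ℕ} (b : Fin m → ℝ) (d : ℝ) (k : ℕ) : Set ℝ :=
  {y | |y| ≤ d ∧ ∃ R : ℝ[X], (∀ n, R.coeff n ∈ BB b) ∧ R.natDegree ≤ k ∧ y = R.eval lam⁻¹}

theorem abs_le_of_mem_Bset {m : ℕ} (b : Fin m → ℝ) {u : ℝ} (hu : u ∈ Bset b) : |u| ≤ bmax b := by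
  rcases hu with rfl | ⟨i, rfl⟩
  · rw [abs_zero]
    exact Real.iSup_nonneg fun i => abs_nonneg _
  · exact le_ciSup (f := fun i => |b i|) (Set.finite_range _).bddAbove i

theorem abs_le_of_mem_BB {m : ℕ} (b : Fin m → ℝ) {c : ℝ} (hc : c ∈ BB b) : |c| ≤ 2 * bmax b := by
  obtain ⟨u, hu, v, hv, rfl⟩ := hc
  have h1 := abs_le_of_mem_Bset b hu
  have h2 := abs_le_of_mem_Bset b hv
  have h3 := abs_sub u v
  linarith

theorem stmt18 (lam : ℝ) (hlam0 : 0 < lam) (hlam1 : lam < 1)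
    {m : ℕ} (hm : 2 ≤ m)
    (b : Fin m → ℝ) (hbZ : ∀ i, ∃ z : ℤ, b i = (z : ℝ))
    (d : ℝ) (hd : 2 * bmax b / (lam⁻¹ - 1) ≤ d) :
    ∀ k : ℕ, 1 ≤ k →
      Dset lam b d k =
        {y : ℝ | |y| ≤ d} ∩ {y : ℝ | ∃ y' ∈ Dset lam b d (k - 1), ∃ c ∈ BB b, y = lam⁻¹ * y' + c} := by
  intro k hk
  have hθ : 1 < lam⁻¹ := (one_lt_inv₀ hlam0).2 hlam1
  rw [div_le_iff₀ (by linarith)] at hd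
  ext y
  constructor
  · rintro ⟨hy, R, hR, hdeg, rfl⟩
    have hE : R.eval lam⁻¹ = lam⁻¹ * R.divX.eval lam⁻¹ + R.coeff 0 := by
      conv_lhs => rw [← R.divX_mul_X_add]
      rw [eval_add, eval_mul, eval_X, eval_C, mul_comm]
    refine ⟨hy, R.divX.eval lam⁻¹, ⟨?_, R.divX, ?_, ?_, rfl⟩, R.coeff 0, hR 0, hE⟩
    · have hc := abs_le_of_mem_BB b (hR 0)
      rw [hE] at hy
      rw [abs_le] at hc hy ⊢
      constructor
      · by_contra! h
        nlinarith
      · by_contra! h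
        nlinarith
    · intro n
      rw [coeff_divX]
      exact hR _
    · rw [natDegree_divX_eq_natDegree_tsub_one]
      omega
  · rintro ⟨hy, y', ⟨hy', R, hR, hdeg, rfl⟩, c, hc, rfl⟩
    refine ⟨hy, R * X + C c, ?_, ?_, ?_⟩
    · rintro (_ | n)
      · simpa using hc
      · simpa [coeff_C] using hR n
    · rw [natDegree_add_C]
      refine natDegree_mul_le.trans ?_
      rw [natDegree_X]
      omega
    · simp [mul_comm]

end PVOSC
end
end
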